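/- (Partial oscillator death: invariance) Let (θ_1,...,θ_N) be a global solution of the Winfree model of order n, let p be an integer with 2 ≤ p ≤ N, and assume: 0 < α < π, |θ_i(0)| < α for every i ∈ {1,...,p}, and κ > (N/p) · (max_i |ν_i|)/(a_n sin α (1 + cos α)^n). Then for every t ≥ 0 and every i ∈ {1,...,p}, |θ_i(t)| < α. -/

import Mathlib

open Real Filter

/-- Normalizing constant `a_n = 2^n (n!)^2 / (2n)!`. -/
noncomputable def aW (n : ℕ) : ℝ :=
  2 ^ n * (Nat.factorial n : ℝ) ^ 2 / (Nat.factorial (2 * n) : ℝ)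

/-- Influence function `I_n(θ) = a_n (1 + cos θ)^n`. -/
noncomputable def influence (n : ℕ) (θ : ℝ) : ℝ := aW n * (1 + Real.cos θ) ^ n

/-- Sensitivity function `S(θ) = -sin θ`. -/
noncomputable def sens (θ : ℝ) : ℝ := -Real.sin θ

/-- A global solution of the Winfree model of order `n` with `N` oscillators,
natural frequencies `ν` and coupling strength `κ`:
`θ_i'(t) = ν_i + (κ/N) S(θ_i(t)) Σ_j I_n(θ_j(t))` for all `t ≥ 0`. -/
def IsWinfreeSol (n N : ℕ) (ν : Fin N → ℝ) (κ : ℝ) (θ : Fin N → ℝ → ℝ) : Prop :=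
  ∀ i : Fin N, ∀ t : ℝ, 0 ≤ t →
    HasDerivAt (θ i)
      (ν i + (κ / N) * sens (θ i t) * ∑ j : Fin N, influence n (θ j t)) t

/- Consider the first time at which some `|θ i|`, with `i` in a set `P` of oscillators, reaches `α`.
At that moment every oscillator of `P` lies in `[-α, α]`, where the influence is at least `I_n(α)`,
so the coupling pushes `θ i` inwards with a force of at least `(κ / N) * |P| * sin α * I_n(α)`. By
the assumption on `κ` this exceeds `|ν i|`, so `|θ i|` has negative derivative at a moment when it
reaches `α` from below, which is absurd. -/

theorem exists_first_hit {X Y : Type*} [ConditionallyCompleteLinearOrder X] [TopologicalSpace X]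
    [OrderTopology X] [DenselyOrdered X] [LinearOrder Y] [TopologicalSpace Y]
    [OrderClosedTopology Y] {g : X → Y} {a b : X} {c : Y} (hab : a ≤ b)
    (hg : ContinuousOn g (Set.Icc a b)) (ha : g a < c) (hb : c ≤ g b) :
    ∃ T ∈ Set.Ioc a b, g T = c ∧ ∀ s ∈ Set.Ico a T, g s < c := by
  have hne : (Set.Icc a b ∩ g ⁻¹' {c}).Nonempty := intermediate_value_Icc hab hg ⟨ha.le, hb⟩
  have hcompact : IsCompact (Set.Icc a b ∩ g ⁻¹' {c}) :=
    isCompact_Icc.of_isClosed_subset (hg.preimage_isClosed_of_isClosed isClosed_Icc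
      isClosed_singleton) Set.inter_subset_left
  obtain ⟨T, ⟨⟨haT, hTb⟩, hT⟩, hmin⟩ := hcompact.exists_isLeast hne
  refine ⟨T, ⟨haT.lt_of_ne ?_, hTb⟩, hT, fun s hs => ?_⟩
  · rintro rfl
    exact ha.ne hT
  · by_contra! hcs
    have hsub : Set.Icc a s ⊆ Set.Icc a b := Set.Icc_subset_Icc_right (hs.2.le.trans hTb)
    obtain ⟨r, hr, hrc⟩ := intermediate_value_Icc hs.1 (hg.mono hsub) ⟨ha.le, hcs⟩
    exact (hr.2.trans_lt hs.2).not_ge (hmin ⟨hsub hr, hrc⟩)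

theorem eventually_gt_left_of_hasDerivWithinAt_neg {f : ℝ → ℝ} {f' x : ℝ}
    (hf : HasDerivWithinAt f f' (Set.Iio x) x) (hf' : f' < 0) :
    ∀ᶠ y in nhdsWithin x (Set.Iio x), f x < f y := by
  filter_upwards [hf.limsup_slope_le' (lt_irrefl x) hf', self_mem_nhdsWithin] with y hslope hy
  rw [slope_def_field, div_neg_iff] at hslope
  rcases hslope with h | h
  · exact sub_pos.mp h.1
  · exact absurd hy (sub_pos.mp h.2).not_gt

theorem forall_lt_of_deriv_neg_at_barrier {ι : Type*} {P : Finset ι} {f : ι → ℝ → ℝ} {a c : ℝ}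
    (hcont : ∀ i ∈ P, ContinuousOn (f i) (Set.Ici a)) (hinit : ∀ i ∈ P, f i a < c)
    (hbarrier : ∀ t, a < t → (∀ j ∈ P, f j t ≤ c) → ∀ i ∈ P, f i t = c →
      ∃ f' < 0, HasDerivWithinAt (f i) f' (Set.Iio t) t) :
    ∀ t, a ≤ t → ∀ i ∈ P, f i t < c := by
  intro t hat i hi
  by_contra! hct
  have hP : P.Nonempty := ⟨i, hi⟩
  have hsup_cont : ContinuousOn (fun s => P.sup' hP fun j => f j s) (Set.Icc a t) :=
    ContinuousOn.finset_sup'_apply hP fun j hj => (hcont j hj).mono Set.Icc_subset_Ici_self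
  obtain ⟨T, ⟨haT, -⟩, hT, hbefore⟩ := exists_first_hit hat hsup_cont
    ((Finset.sup'_lt_iff hP).mpr hinit) (hct.trans (Finset.le_sup' (fun j => f j t) hi))
  obtain ⟨k, hk, hkT⟩ := Finset.exists_mem_eq_sup' hP fun j => f j T
  have hk_hit : f k T = c := hkT.symm.trans hT
  have hle : ∀ j ∈ P, f j T ≤ c := fun j hj => hT ▸ Finset.le_sup' (fun j => f j T) hj
  obtain ⟨f', hf'neg, hf'⟩ := hbarrier T haT hle k hk hk_hit
  obtain ⟨s, hs_gt, hs⟩ := ((eventually_gt_left_of_hasDerivWithinAt_neg hf' hf'neg).and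
    (Ioo_mem_nhdsLT haT)).exists
  have hs_lt : f k s < c := (Finset.sup'_lt_iff hP).mp (hbefore s ⟨hs.1.le, hs.2⟩) k hk
  exact (hk_hit ▸ hs_gt).not_gt hs_lt

theorem signType_mul_le_abs {R : Type*} [Ring R] [LinearOrder R] [IsOrderedAddMonoid R]
    (σ : SignType) (y : R) : σ * y ≤ |y| := by
  cases σ <;> simp [neg_le_abs, le_abs_self]

theorem sign_mul_sin (x : ℝ) : (SignType.sign x : ℝ) * sin x = sin |x| := by
  rcases lt_trichotomy x 0 with hx | rfl | hx
  · simp [hx, abs_of_neg]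
  · simp
  · simp [hx, abs_of_pos]

theorem lt_div_mul_of_div_mul_div_lt {F : Type*} [Field F] [LinearOrder F] [IsStrictOrderedRing F]
    {m d k N κ : F} (hN : 0 < N) (hk : 0 < k) (hd : 0 < d)
    (h : N / k * m / d < κ) : m < κ / N * (d * k) :=
  calc m = N / k * m / d * (d * k / N) := by field_simp
    _ < κ * (d * k / N) := by gcongr
    _ = κ / N * (d * k) := by ring

section Influence

variable (n : ℕ)

theorem aW_pos : 0 < aW n := by
  unfold aW
  positivity

theorem influence_nonneg (x : ℝ) : 0 ≤ influence n x :=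
  mul_nonneg (aW_pos n).le (pow_nonneg (by linarith [neg_one_le_cos x]) n)

theorem influence_le_influence_of_abs_le {x y : ℝ} (hxy : |x| ≤ y) (hyπ : y ≤ π) :
    influence n y ≤ influence n x := by
  have hcos : cos y ≤ cos x := cos_abs x ▸ cos_le_cos_of_nonneg_of_le_pi (abs_nonneg x) hyπ hxy
  have hcos_y : 0 ≤ 1 + cos y := by linarith [neg_one_le_cos y]
  have ha := aW_pos n
  unfold influence
  gcongr

theorem card_mul_influence_le_sum {ι : Type*} [Fintype ι] {P : Finset ι} {x : ι → ℝ} {α : ℝ}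
    (hx : ∀ j ∈ P, |x j| ≤ α) (hαπ : α ≤ π) :
    P.card * influence n α ≤ ∑ j, influence n (x j) :=
  calc P.card * influence n α
      = P.card • influence n α := (nsmul_eq_mul _ _).symm
    _ ≤ ∑ j ∈ P, influence n (x j) := Finset.card_nsmul_le_sum P _ _ fun j hj =>
        influence_le_influence_of_abs_le n (hx j hj) hαπ
    _ ≤ ∑ j, influence n (x j) :=
        Finset.sum_le_univ_sum_of_nonneg fun j => influence_nonneg n (x j)

theorem aW_mul_sin_mul_pow_pos {α : ℝ} (hα0 : 0 < α) (hαπ : α < π) :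
    0 < aW n * sin α * (1 + cos α) ^ n := by
  have hcos : -1 < cos α := cos_pi ▸ cos_lt_cos_of_nonneg_of_le_pi hα0.le le_rfl hαπ
  exact mul_pos (mul_pos (aW_pos n) (sin_pos_of_pos_of_lt_pi hα0 hαπ)) (pow_pos (by linarith) n)

end Influence

theorem IsWinfreeSol.hasDerivAt_abs {n N : ℕ} {ν : Fin N → ℝ} {κ : ℝ} {θ : Fin N → ℝ → ℝ}
    (hθ : IsWinfreeSol n N ν κ θ) {i : Fin N} {t : ℝ} (ht : 0 ≤ t) (hne : θ i t ≠ 0) :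
    HasDerivAt (fun s => |θ i s|) (SignType.sign (θ i t) * ν i
      - κ / N * (sin |θ i t| * ∑ j, influence n (θ j t))) t := by
  refine ((_root_.hasDerivAt_abs hne).comp t (hθ i t ht)).congr_deriv ?_
  rw [← sign_mul_sin, sens]
  ring

theorem stmt11_general {n N : ℕ} {ν : Fin N → ℝ} {κ : ℝ} {θ : Fin N → ℝ → ℝ}
    (hθ : IsWinfreeSol n N ν κ θ) {α : ℝ} (hα0 : 0 < α) (hαπ : α < π) (P : Finset (Fin N))
    (hinit : ∀ i ∈ P, |θ i 0| < α)
    (hκ : ∀ i ∈ P, (N : ℝ) / P.card * |ν i| / (aW n * sin α * (1 + cos α) ^ n) < κ) :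
    ∀ t, 0 ≤ t → ∀ i ∈ P, |θ i t| < α := by
  refine forall_lt_of_deriv_neg_at_barrier
    (fun i _ t ht => (hθ i t ht).continuousAt.abs.continuousWithinAt) hinit
    fun t ht hle i hi hit => ?_
  have hne : θ i t ≠ 0 := abs_pos.mp (hit ▸ hα0)
  refine ⟨_, ?_, (hθ.hasDerivAt_abs ht.le hne).hasDerivWithinAt⟩
  have hN : (0 : ℝ) < N := Nat.cast_pos.mpr i.pos
  have hP : (0 : ℝ) < P.card := Nat.cast_pos.mpr (Finset.card_pos.mpr ⟨i, hi⟩)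
  have hsin : 0 < sin α := sin_pos_of_pos_of_lt_pi hα0 hαπ
  have hforce := aW_mul_sin_mul_pow_pos n hα0 hαπ
  have hκ0 : 0 < κ := lt_of_le_of_lt (by positivity) (hκ i hi)
  rw [sub_neg, hit]
  calc SignType.sign (θ i t) * ν i
      ≤ |ν i| := signType_mul_le_abs _ _
    _ < κ / N * (aW n * sin α * (1 + cos α) ^ n * P.card) :=
        lt_div_mul_of_div_mul_div_lt hN hP hforce (hκ i hi)
    _ = κ / N * (sin α * (P.card * influence n α)) := by
        unfold influence
        ring
    _ ≤ κ / N * (sin α * ∑ j, influence n (θ j t)) := by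
        gcongr
        exact card_mul_influence_le_sum n hle hαπ.le

/-- Partial oscillator death (invariance): if the first `p` oscillators start in
`(-α, α)` and `κ > (N/p)·(max_i |ν_i|)/(a_n sin α (1 + cos α)^n)`, then the first
`p` oscillators stay in `(-α, α)` for all `t ≥ 0`. -/
theorem stmt11 (n N p : ℕ) (hn : 0 < n) [NeZero N] (hp2 : 2 ≤ p) (hpN : p ≤ N)
    (ν : Fin N → ℝ) (κ : ℝ) (θ : Fin N → ℝ → ℝ) (hθ : IsWinfreeSol n N ν κ θ)
    (α : ℝ) (hα0 : 0 < α) (hαπ : α < Real.pi)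
    (hinit : ∀ i : Fin N, (i : ℕ) < p → |θ i 0| < α)
    (hκ : ((N : ℝ) / p) * (⨆ i : Fin N, |ν i|) /
            (aW n * Real.sin α * (1 + Real.cos α) ^ n) < κ) :
    ∀ t : ℝ, 0 ≤ t → ∀ i : Fin N, (i : ℕ) < p → |θ i t| < α := by
  have hforce := aW_mul_sin_mul_pow_pos n hα0 hαπ
  have hmax (i : Fin N) : |ν i| ≤ ⨆ j, |ν j| :=
    le_ciSup (Set.finite_range fun j => |ν j|).bddAbove i
  have hcard : (Finset.univ.filter fun i : Fin N => (i : ℕ) < p).card = p := by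
    rw [Fin.card_filter_val_lt, min_eq_right hpN]
  simpa using stmt11_general hθ hα0 hαπ (Finset.univ.filter fun i : Fin N => (i : ℕ) < p)
    (by simpa using hinit) fun i _ => lt_of_le_of_lt (by rw [hcard]; gcongr; exact hmax i) hκ
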